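/- Let P = (X, ≺) be a poset on |X| = n elements, let A_P = (X, L) be the corresponding poset antimatroid, let ω : X → ℝ_{>0} be a positive weight function satisfying the cover monotonicity property (CM), and fix an integer 1 ≤ k < n. Then L_ω(k)² = L_ω(k−1)·L_ω(k+1) if and only if there exists s > 0 such that for every feasible word α ∈ L of length k−1 and every x ∈ Cnt(α): (AE1) Σ_{x' ∈ Cnt(α)} ω(x') = s; (AE2) Des_α(x) = Cov(x); and (AE3) Σ_{y ∈ Cov(x)} ω(y) = ω(x). -/

import Mathlib

open scoped Classical BigOperators

noncomputable section

variable {X : Type*} [Fintype X] [DecidableEq X] [PartialOrder X]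

/-- A feasible word of the poset antimatroid of `(X, ≺)`: a simple word such that every
letter is preceded by all elements below it in the poset. -/
def FeasibleWord (α : List X) : Prop :=
  α.Nodup ∧ ∀ (l₁ l₂ : List X) (x : X), α = l₁ ++ x :: l₂ → ∀ y : X, y < x → y ∈ l₁

/-- All words of length `k` over the alphabet `X`. -/
def wordsLen (X : Type*) [Fintype X] [DecidableEq X] (k : ℕ) : Finset (List X) :=
  (Finset.univ : Finset (Fin k → X)).image List.ofFn

/-- The weighted count `L_ω(k) = Σ_{α ∈ L_k} Π_{x ∈ α} ω(x)` over feasible words of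
length `k`. -/
def Lw (ω : X → ℝ) (k : ℕ) : ℝ :=
  ∑ α ∈ (wordsLen X k).filter (fun α => FeasibleWord α), (α.map ω).prod

/-- The set `Cov(x)` of elements covering `x` in the poset. -/
def covers (x : X) : Finset X := Finset.univ.filter (fun y => x ⋖ y)

/-- The set `Cnt(α)` of continuations of a feasible word `α`. -/
def CntA (α : List X) : Finset X :=
  Finset.univ.filter (fun x => FeasibleWord (α ++ [x]))

/-- The set `Des_α(x)` of descendants of `x` with respect to `α`. -/
def DesA (α : List X) (x : X) : Finset X :=
  Finset.univ.filter (fun y => FeasibleWord (α ++ [x, y]) ∧ ¬ FeasibleWord (α ++ [y]))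

/-! ### A local-to-global lemma for symmetric matrices with positive off-diagonal entries -/

lemma lap_identity {Y : Type*} (C : Finset Y) (a : Y → Y → ℝ)
    (hsym : ∀ x ∈ C, ∀ y ∈ C, a x y = a y x) (h : Y → ℝ) :
    ∑ x ∈ C, ∑ y ∈ C, a x y * (h x - h y) ^ 2
      = 2 * ∑ x ∈ C, h x * ((∑ y ∈ C, a x y) * h x - ∑ y ∈ C, a x y * h y) := by
  have e1 : ∑ x ∈ C, ∑ y ∈ C, a x y * h y ^ 2 = ∑ x ∈ C, ∑ y ∈ C, a x y * h x ^ 2 := by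
    rw [Finset.sum_comm]
    refine Finset.sum_congr rfl fun x hx => Finset.sum_congr rfl fun y hy => ?_
    rw [hsym y hy x hx]
  have e2 : ∑ x ∈ C, h x * ((∑ y ∈ C, a x y) * h x - ∑ y ∈ C, a x y * h y)
      = ∑ x ∈ C, ∑ y ∈ C, a x y * h x ^ 2 - ∑ x ∈ C, ∑ y ∈ C, a x y * h x * h y := by
    rw [← Finset.sum_sub_distrib]
    refine Finset.sum_congr rfl fun x hx => ?_
    rw [mul_sub, Finset.sum_mul, Finset.mul_sum, Finset.mul_sum]
    congr 1 <;> refine Finset.sum_congr rfl fun y hy => ?_ <;> ring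
  have e3 : ∑ x ∈ C, ∑ y ∈ C, a x y * (h x - h y) ^ 2
      = ∑ x ∈ C, ∑ y ∈ C, a x y * h x ^ 2 - 2 * ∑ x ∈ C, ∑ y ∈ C, a x y * h x * h y
        + ∑ x ∈ C, ∑ y ∈ C, a x y * h y ^ 2 := by
    simp only [Finset.mul_sum, ← Finset.sum_sub_distrib, ← Finset.sum_add_distrib]
    refine Finset.sum_congr rfl fun x hx => Finset.sum_congr rfl fun y hy => ?_
    ring
  rw [e3, e2, e1]; ring

lemma lap_nonneg {Y : Type*} (C : Finset Y) (a : Y → Y → ℝ)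
    (hsym : ∀ x ∈ C, ∀ y ∈ C, a x y = a y x)
    (hpos : ∀ x ∈ C, ∀ y ∈ C, x ≠ y → 0 < a x y) (h : Y → ℝ) :
    0 ≤ ∑ x ∈ C, h x * ((∑ y ∈ C, a x y) * h x - ∑ y ∈ C, a x y * h y) ∧
    (∑ x ∈ C, h x * ((∑ y ∈ C, a x y) * h x - ∑ y ∈ C, a x y * h y) = 0 →
      ∀ x ∈ C, ∀ y ∈ C, h x = h y) := by
  have hi := lap_identity C a hsym h
  have ht : ∀ x ∈ C, ∀ y ∈ C, 0 ≤ a x y * (h x - h y) ^ 2 := by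
    intro x hx y hy
    by_cases hxy : x = y
    · simp [hxy]
    · have := hpos x hx y hy hxy
      positivity
  have hs : ∀ x ∈ C, 0 ≤ ∑ y ∈ C, a x y * (h x - h y) ^ 2 :=
    fun x hx => Finset.sum_nonneg (ht x hx)
  have h0 := Finset.sum_nonneg hs
  refine ⟨by linarith, fun hz x hx y hy => ?_⟩
  rw [hz, mul_zero, Finset.sum_eq_zero_iff_of_nonneg hs] at hi
  have h2 := hi x hx
  rw [Finset.sum_eq_zero_iff_of_nonneg (ht x hx)] at h2
  have h3 := h2 y hy
  by_cases hxy : x = y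
  · rw [hxy]
  · have h4 := hpos x hx y hy hxy
    rcases mul_eq_zero.1 h3 with h5 | h5
    · linarith
    · have := pow_eq_zero_iff (two_ne_zero) |>.1 h5
      linarith

lemma lap_solve {Y : Type*} [Fintype Y] (C : Finset Y) (a : Y → Y → ℝ)
    (hsym : ∀ x ∈ C, ∀ y ∈ C, a x y = a y x)
    (hpos : ∀ x ∈ C, ∀ y ∈ C, x ≠ y → 0 < a x y) (β : Y → ℝ) (hβ : ∑ x ∈ C, β x = 0) :
    ∃ h : Y → ℝ, ∀ x ∈ C, (∑ y ∈ C, a x y) * h x - ∑ y ∈ C, a x y * h y = β x := by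
  let Op : (Y → ℝ) →ₗ[ℝ] (Y → ℝ) :=
    { toFun := fun h x => if x ∈ C then
        (∑ y ∈ C, a x y) * h x - ∑ y ∈ C, a x y * h y + ∑ y ∈ C, h y else h x
      map_add' := by
        intro f g; funext x
        by_cases hx : x ∈ C
        · simp only [hx, if_true, Pi.add_apply, mul_add, Finset.sum_add_distrib]; ring
        · simp [hx]
      map_smul' := by
        intro c f; funext x
        by_cases hx : x ∈ C
        · simp only [hx, if_true, Pi.smul_apply, smul_eq_mul, RingHom.id_apply]
          have : ∀ y, a x y * (c * f y) = c * (a x y * f y) := fun y => by ring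
          simp only [this, ← Finset.mul_sum]; ring
        · simp [hx] }
  have hOp : ∀ h x, x ∈ C → Op h x =
      (∑ y ∈ C, a x y) * h x - ∑ y ∈ C, a x y * h y + ∑ y ∈ C, h y := by
    intro h x hx
    show (if x ∈ C then _ else _) = _
    rw [if_pos hx]
  have hOp' : ∀ h x, x ∉ C → Op h x = h x := by
    intro h x hx
    show (if x ∈ C then _ else _) = _
    rw [if_neg hx]
  have hinj : Function.Injective Op := by
    rw [injective_iff_map_eq_zero]
    intro h hh
    have hin : ∀ x ∈ C, (∑ y ∈ C, a x y) * h x - ∑ y ∈ C, a x y * h y + ∑ y ∈ C, h y = 0 := by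
      intro x hx
      rw [← hOp h x hx, hh]; rfl
    have hsum : ∑ x ∈ C, h x * ((∑ y ∈ C, a x y) * h x - ∑ y ∈ C, a x y * h y)
        + (∑ y ∈ C, h y) ^ 2 = 0 := by
      rw [sq, Finset.sum_mul (s := C), ← Finset.sum_add_distrib]
      refine Finset.sum_eq_zero fun x hx => ?_
      rw [← mul_add, hin x hx, mul_zero]
    obtain ⟨l1, l2⟩ := lap_nonneg C a hsym hpos h
    have hs2 := sq_nonneg (∑ y ∈ C, h y)
    have l3 := l2 (by linarith)
    have l4 : ∑ y ∈ C, h y = 0 := by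
      have : (∑ y ∈ C, h y) ^ 2 = 0 := by linarith
      exact pow_eq_zero_iff two_ne_zero |>.1 this
    funext x
    by_cases hx : x ∈ C
    · rw [Finset.sum_congr rfl (fun y hy => l3 y hy x hx), Finset.sum_const, nsmul_eq_mul] at l4
      have : (C.card : ℝ) ≠ 0 := by
        have := Finset.card_pos.2 ⟨x, hx⟩
        positivity
      simpa [this] using l4
    · rw [← hOp' h x hx, hh]
  obtain ⟨h, hh⟩ := (LinearMap.injective_iff_surjective.1 hinj) β
  have hin : ∀ x ∈ C, (∑ y ∈ C, a x y) * h x - ∑ y ∈ C, a x y * h y + ∑ y ∈ C, h y = β x := by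
    intro x hx
    rw [← hOp h x hx, hh]
  have hs : ∑ x ∈ C, ((∑ y ∈ C, a x y) * h x - ∑ y ∈ C, a x y * h y) = 0 := by
    rw [Finset.sum_sub_distrib, Finset.sum_comm (f := fun x y => a x y * h y), sub_eq_zero]
    refine Finset.sum_congr rfl fun x hx => ?_
    rw [Finset.sum_mul]
    refine Finset.sum_congr rfl fun y hy => ?_
    rw [hsym x hx y hy]
  refine ⟨h, fun x hx => ?_⟩
  have h1 : ∑ x ∈ C, ((∑ y ∈ C, a x y) * h x - ∑ y ∈ C, a x y * h y + ∑ y ∈ C, h y) = 0 := by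
    rw [Finset.sum_congr rfl hin, hβ]
  rw [Finset.sum_add_distrib, hs, zero_add, Finset.sum_const, nsmul_eq_mul] at h1
  have : (C.card : ℝ) ≠ 0 := by
    have := Finset.card_pos.2 ⟨x, hx⟩
    positivity
  have h2 : ∑ y ∈ C, h y = 0 := by simpa [this] using h1
  have := hin x hx
  linarith

lemma local_global {Y : Type*} [Fintype Y] (C : Finset Y) (a : Y → Y → ℝ)
    (hsym : ∀ x ∈ C, ∀ y ∈ C, a x y = a y x)
    (hpos : ∀ x ∈ C, ∀ y ∈ C, x ≠ y → 0 < a x y)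
    (b : Y → ℝ) (a0 : ℝ)
    (star : ∀ (f : Y → ℝ) (f0 : ℝ),
      ∑ x ∈ C, f x * (∑ y ∈ C, a x y * f y + f0 * b x) + f0 * (∑ x ∈ C, b x * f x + f0 * a0)
        ≤ ∑ x ∈ C, (∑ y ∈ C, a x y * f y + f0 * b x) ^ 2 / (∑ y ∈ C, a x y))
    (f : Y → ℝ) (f0 : ℝ) (hf : ∑ x ∈ C, (∑ y ∈ C, a x y * f y + f0 * b x) = 0) :
    ∑ x ∈ C, f x * (∑ y ∈ C, a x y * f y + f0 * b x)
        + f0 * (∑ x ∈ C, b x * f x + f0 * a0) ≤ 0 ∧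
    (∑ x ∈ C, f x * (∑ y ∈ C, a x y * f y + f0 * b x)
        + f0 * (∑ x ∈ C, b x * f x + f0 * a0) = 0 →
      ∀ x ∈ C, ∑ y ∈ C, a x y * f y + f0 * b x = 0) := by
  obtain ⟨h, hh⟩ := lap_solve C a hsym hpos _ hf
  obtain ⟨l1, l2⟩ := lap_nonneg C a hsym hpos h
  have hrow : ∀ x ∈ C, ∑ y ∈ C, a x y * (f y + h y) + f0 * b x = (∑ y ∈ C, a x y) * h x := by
    intro x hx
    have := hh x hx
    simp only [mul_add, Finset.sum_add_distrib]
    linarith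
  have hst := star (fun x => f x + h x) f0
  have hR : ∑ x ∈ C, (∑ y ∈ C, a x y * (f y + h y) + f0 * b x) ^ 2 / (∑ y ∈ C, a x y)
      = ∑ x ∈ C, h x * ((∑ y ∈ C, a x y) * h x) := by
    refine Finset.sum_congr rfl fun x hx => ?_
    rw [hrow x hx]
    by_cases hD : ∑ y ∈ C, a x y = 0
    · rw [hD]; simp
    · field_simp
  have hL : ∑ x ∈ C, (f x + h x) * (∑ y ∈ C, a x y * (f y + h y) + f0 * b x)
        + f0 * (∑ x ∈ C, b x * (f x + h x) + f0 * a0)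
      = (∑ x ∈ C, f x * (∑ y ∈ C, a x y * f y + f0 * b x)
        + f0 * (∑ x ∈ C, b x * f x + f0 * a0))
        + ∑ x ∈ C, h x * ((∑ y ∈ C, a x y) * h x)
        + ∑ x ∈ C, h x * ((∑ y ∈ C, a x y) * h x - ∑ y ∈ C, a x y * h y) := by
    have s1 : ∑ x ∈ C, f x * (∑ y ∈ C, a x y * h y) = ∑ x ∈ C, h x * (∑ y ∈ C, a x y * f y) := by
      simp only [Finset.mul_sum]
      rw [Finset.sum_comm]
      refine Finset.sum_congr rfl fun x hx => Finset.sum_congr rfl fun y hy => ?_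
      rw [hsym y hy x hx]; ring
    have s2 : ∑ x ∈ C, (f x + h x) * (∑ y ∈ C, a x y * (f y + h y) + f0 * b x)
        = ∑ x ∈ C, f x * (∑ y ∈ C, a x y * f y + f0 * b x)
          + ∑ x ∈ C, f x * (∑ y ∈ C, a x y * h y) + ∑ x ∈ C, h x * ((∑ y ∈ C, a x y) * h x) := by
      rw [← Finset.sum_add_distrib, ← Finset.sum_add_distrib]
      refine Finset.sum_congr rfl fun x hx => ?_
      have h1 := hrow x hx
      have h2 := hh x hx
      rw [h1]
      have h3 : (∑ y ∈ C, a x y) * h x = (∑ y ∈ C, a x y * f y + f0 * b x)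
        + ∑ y ∈ C, a x y * h y := by linarith
      linear_combination f x * h3
    have s3 : ∑ x ∈ C, h x * ((∑ y ∈ C, a x y) * h x - ∑ y ∈ C, a x y * h y)
        = ∑ x ∈ C, h x * (∑ y ∈ C, a x y * f y) + f0 * ∑ x ∈ C, b x * h x := by
      rw [Finset.mul_sum, ← Finset.sum_add_distrib]
      refine Finset.sum_congr rfl fun x hx => ?_
      rw [hh x hx]; ring
    have s4 : ∑ x ∈ C, b x * (f x + h x) = ∑ x ∈ C, b x * f x + ∑ x ∈ C, b x * h x := by
      simp only [mul_add, Finset.sum_add_distrib]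
    rw [s2, s3, s4, s1]; ring
  rw [hR, hL] at hst
  refine ⟨by linarith, fun hz x hx => ?_⟩
  have hc := l2 (by linarith)
  rw [← hh x hx, Finset.sum_mul, ← Finset.sum_sub_distrib]
  refine Finset.sum_eq_zero fun y hy => ?_
  rw [hc x hx y hy]; ring

/-! ### Continuations of order ideals -/

def Cn (I : Finset X) : Finset X := Finset.univ.filter (fun x => x ∉ I ∧ ∀ y, y < x → y ∈ I)

def NN (ω : X → ℝ) : ℕ → Finset X → ℝ
  | 0, _ => 1
  | m + 1, I => ∑ x ∈ Cn I, ω x * NN ω m (insert x I)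

def TT (I : Finset X) (x : X) (f : X → ℝ) : X → ℝ := fun y => if y ∈ Cn I then f y else f x

def ell (ω : X → ℝ) (m : ℕ) (I : Finset X) (f : X → ℝ) (f0 : ℝ) : ℝ :=
  ∑ x ∈ Cn I, ω x * NN ω m (insert x I) * f x + f0 * NN ω m I

def QQ (ω : X → ℝ) (m : ℕ) (I : Finset X) (f : X → ℝ) (f0 : ℝ) : ℝ :=
  ∑ x ∈ Cn I, f x * (ω x * ell ω m (insert x I) (TT I x f) f0) + f0 * ell ω m I f f0

lemma mem_Cn {I : Finset X} {x : X} : x ∈ Cn I ↔ x ∉ I ∧ ∀ y, y < x → y ∈ I := by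
  simp [Cn]

lemma mem_Cn_insert {I : Finset X} {x y : X} :
    y ∈ Cn (insert x I) ↔ y ≠ x ∧ y ∉ I ∧ ∀ z, z < y → z = x ∨ z ∈ I := by
  simp [Cn, and_assoc]

lemma Cn_nonempty {I : Finset X} (h : I.card < Fintype.card X) : (Cn I).Nonempty := by
  have h1 : (Iᶜ).Nonempty := by
    rw [← Finset.card_pos, Finset.card_compl]; omega
  obtain ⟨x, hx⟩ := Finset.exists_minimal h1
  refine ⟨x, mem_Cn.2 ⟨by simpa using hx.1, fun y hy => ?_⟩⟩
  by_contra hyI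
  exact absurd (hx.2 (by simpa using hyI) hy.le) hy.not_ge

lemma NN_nonneg (ω : X → ℝ) (hω : ∀ x, 0 < ω x) (m : ℕ) : ∀ I : Finset X, 0 ≤ NN ω m I := by
  induction m with
  | zero => intro I; simp [NN]
  | succ m ih => 
    intro I
    exact Finset.sum_nonneg fun x _ => mul_nonneg (hω x).le (ih _)

lemma NN_pos (ω : X → ℝ) (hω : ∀ x, 0 < ω x) (m : ℕ) :
    ∀ I : Finset X, I.card + m ≤ Fintype.card X → 0 < NN ω m I := by
  induction m with
  | zero => intro I _; simp [NN]
  | succ m ih => 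
    intro I hI
    refine Finset.sum_pos (fun x hx => mul_pos (hω x) (ih _ ?_)) (Cn_nonempty (by omega))
    rw [Finset.card_insert_of_notMem (mem_Cn.1 hx).1]; omega

lemma inter_Cn {I : Finset X} {x : X} :
    (Cn (insert x I)).filter (fun y => y ∈ Cn I) = (Cn I).erase x := by
  ext y
  rw [Finset.mem_filter, mem_Cn_insert, Finset.mem_erase, mem_Cn]
  constructor
  · rintro ⟨h1, h2⟩; exact ⟨h1.1, h2⟩
  · rintro ⟨h1, h2⟩; exact ⟨⟨h1, h2.1, fun z hz => Or.inr (h2.2 z hz)⟩, h2⟩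

/-- descendants -/
def Ds (I : Finset X) (x : X) : Finset X := (Cn (insert x I)).filter (fun y => y ∉ Cn I)

lemma sum_Cn_insert {I : Finset X} {x : X} (g : X → ℝ) :
    ∑ y ∈ Cn (insert x I), g y = ∑ y ∈ (Cn I).erase x, g y + ∑ y ∈ Ds I x, g y := by
  rw [← inter_Cn, Ds, Finset.sum_filter_add_sum_filter_not]

def aa (ω : X → ℝ) (m : ℕ) (I : Finset X) (x y : X) : ℝ :=
  if x = y then ω x * ∑ z ∈ Ds I x, ω z * NN ω m (insert z (insert x I))
  else ω x * ω y * NN ω m (insert y (insert x I))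

lemma aa_symm (ω : X → ℝ) (m : ℕ) (I : Finset X) (x y : X) :
    aa ω m I x y = aa ω m I y x := by
  unfold aa
  by_cases h : x = y
  · subst h; rfl
  · rw [if_neg h, if_neg (Ne.symm h), Finset.insert_comm]; ring

lemma row_eq (ω : X → ℝ) (m : ℕ) (I : Finset X) {x : X} (hx : x ∈ Cn I) (f : X → ℝ) (f0 : ℝ) :
    ω x * ell ω m (insert x I) (TT I x f) f0
      = ∑ y ∈ Cn I, aa ω m I x y * f y + f0 * (ω x * NN ω m (insert x I)) := by
  rw [← Finset.add_sum_erase _ _ hx, ell, sum_Cn_insert, mul_add, mul_add]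
  have h1 : ω x * ∑ y ∈ (Cn I).erase x, ω y * NN ω m (insert y (insert x I)) * TT I x f y
      = ∑ y ∈ (Cn I).erase x, aa ω m I x y * f y := by
    rw [Finset.mul_sum]
    refine Finset.sum_congr rfl fun y hy => ?_
    rw [Finset.mem_erase] at hy
    rw [aa, if_neg (Ne.symm hy.1), TT, if_pos hy.2]; ring
  have h2 : ω x * ∑ y ∈ Ds I x, ω y * NN ω m (insert y (insert x I)) * TT I x f y
      = aa ω m I x x * f x := by
    rw [aa, if_pos rfl, mul_assoc, Finset.sum_mul]
    congr 1
    refine Finset.sum_congr rfl fun y hy => ?_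
    rw [Ds, Finset.mem_filter] at hy
    rw [TT, if_neg hy.2]
  rw [h1, h2]; ring

lemma TT_const (I : Finset X) (x : X) (c : ℝ) : TT I x (fun _ => c) = fun _ => c := by
  funext y; simp [TT]

lemma ell_const (ω : X → ℝ) (m : ℕ) (I : Finset X) (c f0 : ℝ) :
    ell ω m I (fun _ => c) f0 = c * NN ω (m + 1) I + f0 * NN ω m I := by
  rw [ell, NN, Finset.mul_sum]
  congr 1
  refine Finset.sum_congr rfl fun x _ => ?_
  ring

lemma row_sum (ω : X → ℝ) (m : ℕ) (I : Finset X) {x : X} (hx : x ∈ Cn I) :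
    ∑ y ∈ Cn I, aa ω m I x y = ω x * NN ω (m + 1) (insert x I) := by
  have := row_eq ω m I hx (fun _ => 1) 0
  rw [TT_const, ell_const] at this
  simpa using this.symm

lemma QQ_const (ω : X → ℝ) (m : ℕ) (I : Finset X) (c f0 : ℝ) :
    QQ ω m I (fun _ => c) f0 =
      c ^ 2 * NN ω (m + 2) I + 2 * c * f0 * NN ω (m + 1) I + f0 ^ 2 * NN ω m I := by
  simp only [QQ, TT_const, ell_const]
  have : ∑ x ∈ Cn I, c * (ω x * (c * NN ω (m + 1) (insert x I) + f0 * NN ω m (insert x I)))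
      = c ^ 2 * NN ω (m + 2) I + c * f0 * NN ω (m + 1) I := by
    rw [NN, NN, Finset.mul_sum, Finset.mul_sum, ← Finset.sum_add_distrib]
    refine Finset.sum_congr rfl fun x _ => ?_
    ring
  rw [this]; ring

/-- `⟨v, A f⟩ = ℓ_{m+1}(f)`. -/
lemma sum_row (ω : X → ℝ) (m : ℕ) (I : Finset X) (f : X → ℝ) (f0 : ℝ) :
    ∑ x ∈ Cn I, ω x * ell ω m (insert x I) (TT I x f) f0 = ell ω (m + 1) I f f0 := by
  rw [Finset.sum_congr rfl (fun x hx => row_eq ω m I hx f f0), Finset.sum_add_distrib,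
    Finset.sum_comm, ell, ← Finset.mul_sum]
  congr 1
  refine Finset.sum_congr rfl fun x hx => ?_
  rw [← Finset.sum_mul, ← row_sum ω m I hx]
  congr 1
  exact Finset.sum_congr rfl fun y _ => aa_symm ω m I y x

lemma QQ_eq (ω : X → ℝ) (m : ℕ) (I : Finset X) (f : X → ℝ) (f0 : ℝ) :
    QQ ω m I f f0 =
      ∑ x ∈ Cn I, f x * (∑ y ∈ Cn I, aa ω m I x y * f y + f0 * (ω x * NN ω m (insert x I)))
      + f0 * (∑ x ∈ Cn I, (ω x * NN ω m (insert x I)) * f x + f0 * NN ω m I) := by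
  rw [QQ, ell]
  congr 1
  exact Finset.sum_congr rfl fun x hx => by rw [row_eq ω m I hx]

lemma ell_shift (ω : X → ℝ) (m : ℕ) (I : Finset X) (f : X → ℝ) (f0 c : ℝ) :
    ell ω m I (fun x => f x - c) f0 = ell ω m I f f0 - c * NN ω (m + 1) I := by
  rw [ell, ell, NN, Finset.mul_sum]
  have : ∑ x ∈ Cn I, ω x * NN ω m (insert x I) * (f x - c) =
    ∑ x ∈ Cn I, ω x * NN ω m (insert x I) * f x - ∑ x ∈ Cn I, c * (ω x * NN ω m (insert x I)) := by
    rw [← Finset.sum_sub_distrib]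
    exact Finset.sum_congr rfl fun x _ => by ring
  rw [this]; ring

lemma QQ_shift (ω : X → ℝ) (m : ℕ) (I : Finset X) (f : X → ℝ) (f0 c : ℝ) :
    QQ ω m I (fun x => f x - c) f0 =
      QQ ω m I f f0 - 2 * c * ell ω (m + 1) I f f0 + c ^ 2 * NN ω (m + 2) I := by
  have hT : ∀ x, TT I x (fun x => f x - c) = fun y => TT I x f y - c := by
    intro x; funext y; simp only [TT]; split_ifs <;> rfl
  simp only [QQ, hT, ell_shift]
  have h1 : ∑ x ∈ Cn I, (f x - c) *
      (ω x * (ell ω m (insert x I) (TT I x f) f0 - c * NN ω (m + 1) (insert x I)))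
      = ∑ x ∈ Cn I, f x * (ω x * ell ω m (insert x I) (TT I x f) f0)
        - c * ∑ x ∈ Cn I, ω x * ell ω m (insert x I) (TT I x f) f0
        - c * ∑ x ∈ Cn I, ω x * NN ω (m + 1) (insert x I) * f x
        + c ^ 2 * ∑ x ∈ Cn I, ω x * NN ω (m + 1) (insert x I) := by
    simp only [Finset.mul_sum, ← Finset.sum_sub_distrib, ← Finset.sum_add_distrib]
    exact Finset.sum_congr rfl fun x _ => by ring
  have h2 : ∑ x ∈ Cn I, ω x * NN ω (m + 1) (insert x I) = NN ω (m + 2) I := by rw [NN]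
  have h3 : ∑ x ∈ Cn I, ω x * NN ω (m + 1) (insert x I) * f x
      = ell ω (m + 1) I f f0 - f0 * NN ω (m + 1) I := by rw [ell]; ring
  rw [h1, sum_row, h2, h3]; ring

def Hyp (ω : X → ℝ) (m : ℕ) (I : Finset X) : Prop :=
  ∀ f f0, ell ω (m + 1) I f f0 = 0 → QQ ω m I f f0 ≤ 0

lemma Hyp.prod {ω : X → ℝ} {m : ℕ} {I : Finset X} (H : Hyp ω m I) (hN : 0 < NN ω (m + 2) I)
    (f : X → ℝ) (f0 : ℝ) :
    QQ ω m I f f0 ≤ ell ω (m + 1) I f f0 ^ 2 / NN ω (m + 2) I := by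
  have h := H (fun x => f x - ell ω (m + 1) I f f0 / NN ω (m + 2) I) f0 (by
    rw [ell_shift]; field_simp; ring)
  rw [QQ_shift] at h
  have e : - 2 * (ell ω (m + 1) I f f0 / NN ω (m + 2) I) * ell ω (m + 1) I f f0
    + (ell ω (m + 1) I f f0 / NN ω (m + 2) I) ^ 2 * NN ω (m + 2) I
    = - (ell ω (m + 1) I f f0 ^ 2 / NN ω (m + 2) I) := by field_simp; ring
  linarith

/-! ### Pull-back inequality -/

lemma sum_sym3 (F : X → X → X → ℝ)
    (h : ∀ x y z, 0 ≤ F x y z + F x z y + F y x z + F y z x + F z x y + F z y x) :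
    0 ≤ ∑ x, ∑ y, ∑ z, F x y z := by
  have e1 : ∑ x, ∑ y, ∑ z, F x z y = ∑ x, ∑ y, ∑ z, F x y z :=
    Finset.sum_congr rfl fun x _ => Finset.sum_comm
  have e2 : ∑ x, ∑ y, ∑ z, F y x z = ∑ x, ∑ y, ∑ z, F x y z := Finset.sum_comm
  have e4 : ∑ x, ∑ y, ∑ z, F z x y = ∑ x, ∑ y, ∑ z, F x y z := by
    rw [Finset.sum_congr rfl fun x _ => Finset.sum_comm, Finset.sum_comm]
  have e3 : ∑ x, ∑ y, ∑ z, F y z x = ∑ x, ∑ y, ∑ z, F x y z := by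
    rw [Finset.sum_comm]
    exact Finset.sum_congr rfl fun x _ => Finset.sum_comm
  have e5 : ∑ x, ∑ y, ∑ z, F z y x = ∑ x, ∑ y, ∑ z, F x y z := by
    rw [Finset.sum_congr rfl fun x _ => Finset.sum_comm, Finset.sum_comm]
    exact Finset.sum_congr rfl fun x _ => Finset.sum_comm
  have := Finset.sum_nonneg fun x (_ : x ∈ Finset.univ) => Finset.sum_nonneg fun y
    (_ : y ∈ Finset.univ) => Finset.sum_nonneg fun z (_ : z ∈ Finset.univ) => h x y z
  simp only [Finset.sum_add_distrib] at this
  rw [e1, e2, e3, e4, e5] at this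
  linarith

set_option maxHeartbeats 4000000 in
lemma pull_point (cx cy cz dxy dxz dyx dyz dzx dzy ex ey ez : Prop)
    [Decidable cx] [Decidable cy] [Decidable cz] [Decidable dxy] [Decidable dxz] [Decidable dyx]
    [Decidable dyz] [Decidable dzx] [Decidable dzy] [Decidable ex] [Decidable ey] [Decidable ez]
    (u fx fy fz : ℝ) (hu : 0 ≤ u)
    (h1 : cy → dxy) (h2 : cz → dxz) (h3 : cx → dyx) (h4 : cz → dyz) (h5 : cx → dzx) (h6 : cy → dzy)
    (h7 : dyx → ex) (h8 : dzx → ex) (h9 : dxy → ey) (h10 : dzy → ey) (h11 : dxz → ez)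
    (h12 : dyz → ez) (k1 : dyx → dzx → cx) (k2 : dxy → dzy → cy) (k3 : dxz → dyz → cz) :
    0 ≤ (if cx ∧ dxy ∧ ez then u * ((if cy then fy else fx) *
          (if dxz then (if cz then fz else fx) else (if cy then fy else fx))
          - fx * (if cy then fy else fx)) else 0)
      + (if cx ∧ dxz ∧ ey then u * ((if cz then fz else fx) *
          (if dxy then (if cy then fy else fx) else (if cz then fz else fx))
          - fx * (if cz then fz else fx)) else 0)
      + (if cy ∧ dyx ∧ ez then u * ((if cx then fx else fy) *
          (if dyz then (if cz then fz else fy) else (if cx then fx else fy))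
          - fy * (if cx then fx else fy)) else 0)
      + (if cy ∧ dyz ∧ ex then u * ((if cz then fz else fy) *
          (if dyx then (if cx then fx else fy) else (if cz then fz else fy))
          - fy * (if cz then fz else fy)) else 0)
      + (if cz ∧ dzx ∧ ey then u * ((if cx then fx else fz) *
          (if dzy then (if cy then fy else fz) else (if cx then fx else fz))
          - fz * (if cx then fx else fz)) else 0)
      + (if cz ∧ dzy ∧ ex then u * ((if cy then fy else fz) *
          (if dzx then (if cx then fx else fz) else (if cy then fy else fz))
          - fz * (if cy then fy else fz)) else 0) := by
  have q1 := mul_nonneg hu (sq_nonneg (fx - fy))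
  have q2 := mul_nonneg hu (sq_nonneg (fx - fz))
  have q3 := mul_nonneg hu (sq_nonneg (fy - fz))
  by_cases hx : cx
  · have x1 := h3 hx
    have x2 := h5 hx
    have x3 := h7 x1
    by_cases hy : cy
    · have y1 := h1 hy
      have y2 := h6 hy
      have y3 := h9 y1
      by_cases hz : cz
      · have z1 := h2 hz
        have z2 := h4 hz
        have z3 := h11 z1
        simp only [hx, hy, hz, x1, x2, x3, y1, y2, y3, z1, z2, z3, if_true, if_false,
          true_and, false_and, and_true, add_zero, zero_add, le_refl, ite_self, sub_self, mul_zero]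
        linarith
      · simp only [hx, hy, hz, x1, x2, x3, y1, y2, y3, if_true, if_false,
          true_and, false_and, and_true, add_zero, zero_add, le_refl, ite_self, sub_self, mul_zero]
        by_cases g1 : dxz
        · have g2 : ¬ dyz := fun g => hz (k3 g1 g)
          have g3 := h11 g1
          simp only [g1, g2, g3, if_true, if_false, true_and, false_and, and_true, and_false, add_zero, zero_add, le_refl]
          try linarith
        · by_cases g2 : dyz
          · have g3 := h12 g2
            simp only [g1, g2, g3, if_true, if_false, true_and, false_and, and_true, and_false, add_zero, zero_add, le_refl]
            try linarith
          · by_cases g3 : ez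
            · simp only [g1, g2, g3, if_true, if_false, true_and, false_and, and_true, and_false, add_zero, zero_add, le_refl]
              try linarith
            · simp only [g1, g2, g3, if_true, if_false, true_and, false_and, and_true, and_false, add_zero, zero_add, le_refl]
              try linarith
    · by_cases hz : cz
      · have z1 := h2 hz
        have z2 := h4 hz
        have z3 := h11 z1
        simp only [hx, hy, hz, x1, x2, x3, z1, z2, z3, if_true, if_false,
          true_and, false_and, and_true, add_zero, zero_add, le_refl, ite_self, sub_self, mul_zero]
        by_cases g1 : dxy
        · have g2 : ¬ dzy := fun g => hy (k2 g1 g)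
          have g3 := h9 g1
          simp only [g1, g2, g3, if_true, if_false, true_and, false_and, and_true, and_false, add_zero, zero_add, le_refl]
          try linarith
        · by_cases g2 : dzy
          · have g3 := h10 g2
            simp only [g1, g2, g3, if_true, if_false, true_and, false_and, and_true, and_false, add_zero, zero_add, le_refl]
            try linarith
          · by_cases g3 : ey
            · simp only [g1, g2, g3, if_true, if_false, true_and, false_and, and_true, and_false, add_zero, zero_add, le_refl]
              try linarith
            · simp only [g1, g2, g3, if_true, if_false, true_and, false_and, and_true, and_false, add_zero, zero_add, le_refl]
              try linarith
      · simp only [hx, hy, hz, x1, x2, x3, if_true, if_false,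
          true_and, false_and, and_true, add_zero, zero_add, le_refl, ite_self, sub_self, mul_zero]
  · by_cases hy : cy
    · have y1 := h1 hy
      have y2 := h6 hy
      have y3 := h9 y1
      by_cases hz : cz
      · have z1 := h2 hz
        have z2 := h4 hz
        have z3 := h11 z1
        simp only [hx, hy, hz, y1, y2, y3, z1, z2, z3, if_true, if_false,
          true_and, false_and, and_true, add_zero, zero_add, le_refl, ite_self, sub_self, mul_zero]
        by_cases g1 : dyx
        · have g2 : ¬ dzx := fun g => hx (k1 g1 g)
          have g3 := h7 g1
          simp only [g1, g2, g3, if_true, if_false, true_and, false_and, and_true, and_false, add_zero, zero_add, le_refl]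
          try linarith
        · by_cases g2 : dzx
          · have g3 := h8 g2
            simp only [g1, g2, g3, if_true, if_false, true_and, false_and, and_true, and_false, add_zero, zero_add, le_refl]
            try linarith
          · by_cases g3 : ex
            · simp only [g1, g2, g3, if_true, if_false, true_and, false_and, and_true, and_false, add_zero, zero_add, le_refl]
              try linarith
            · simp only [g1, g2, g3, if_true, if_false, true_and, false_and, and_true, and_false, add_zero, zero_add, le_refl]
              try linarith
      · simp only [hx, hy, hz, y1, y2, y3, if_true, if_false,
          true_and, false_and, and_true, add_zero, zero_add, le_refl, ite_self, sub_self, mul_zero]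
    · by_cases hz : cz
      · have z1 := h2 hz
        have z2 := h4 hz
        have z3 := h11 z1
        simp only [hx, hy, hz, z1, z2, z3, if_true, if_false,
          true_and, false_and, and_true, add_zero, zero_add, le_refl, ite_self, sub_self, mul_zero]
      · simp only [hx, hy, hz, if_true, if_false,
          true_and, false_and, and_true, add_zero, zero_add, le_refl, ite_self, sub_self, mul_zero]

lemma mem_Cn_insert_of {I : Finset X} {x y : X} (h : y ∈ Cn I) (hxy : y ≠ x) :
    y ∈ Cn (insert x I) := by
  rw [mem_Cn] at h
  rw [mem_Cn_insert]
  exact ⟨hxy, h.1, fun z hz => Or.inr (h.2 z hz)⟩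

lemma mem_Cn_of_two {I : Finset X} {x y z : X} (hxy : x ≠ y) (h1 : z ∈ Cn (insert x I))
    (h2 : z ∈ Cn (insert y I)) : z ∈ Cn I := by
  rw [mem_Cn_insert] at h1 h2
  rw [mem_Cn]
  refine ⟨h1.2.1, fun w hw => ?_⟩
  rcases h1.2.2 w hw with h | h
  · rcases h2.2.2 w hw with h' | h'
    · exact absurd (h.symm.trans h') hxy
    · exact h'
  · exact h

lemma not_mem_Cn_self {I : Finset X} {x : X} : x ∉ Cn (insert x I) := by
  simp [mem_Cn]

lemma not_mem_Cn_self' {I : Finset X} {x y : X} : x ∉ Cn (insert y (insert x I)) := by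
  simp [mem_Cn]

lemma pull (ω : X → ℝ) (hω : ∀ x, 0 < ω x) (m : ℕ) (I : Finset X) (f : X → ℝ) (f0 : ℝ) :
    QQ ω (m + 1) I f f0 ≤ ∑ x ∈ Cn I, ω x * QQ ω m (insert x I) (TT I x f) f0 := by
  -- the quadratic parts, as sums over words of length three
  have hT : 0 ≤ ∑ x ∈ Cn I, ∑ y ∈ Cn (insert x I), ∑ z ∈ Cn (insert y (insert x I)),
      ω x * ω y * ω z * NN ω m (insert z (insert y (insert x I))) *
        (TT I x f y * TT (insert x I) y (TT I x f) z - f x * TT I x f y) := by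
    have hF := sum_sym3 (fun x y z => if x ∈ Cn I ∧ y ∈ Cn (insert x I) ∧
      z ∈ Cn (insert y (insert x I)) then
      ω x * ω y * ω z * NN ω m (insert z (insert y (insert x I))) *
        (TT I x f y * TT (insert x I) y (TT I x f) z - f x * TT I x f y) else 0) ?_
    · refine hF.trans_eq ?_
      symm
      rw [← Finset.sum_filter_add_sum_filter_not Finset.univ (fun x => x ∈ Cn I)]
      rw [Finset.sum_eq_zero (s := Finset.univ.filter (fun x => x ∉ Cn I)), add_zero]
      · simp only [Finset.filter_univ_mem]
        refine Finset.sum_congr rfl fun x hx => ?_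
        simp only [hx, true_and]
        rw [← Finset.sum_subset (Finset.subset_univ (Cn (insert x I)))]
        · refine Finset.sum_congr rfl fun y hy => ?_
          simp only [hy, true_and]
          rw [← Finset.sum_filter]
          simp only [Finset.filter_univ_mem]
        · intro y _ hy
          simp [hy]
      · intro x hx
        simp only [Finset.mem_filter, Finset.mem_univ, true_and] at hx
        simp [hx]
    · intro x y z
      by_cases hxy : x = y
      · subst hxy
        simp [not_mem_Cn_self, not_mem_Cn_self']
      by_cases hxz : x = z
      · subst hxz
        simp [not_mem_Cn_self, not_mem_Cn_self']
      by_cases hyz : y = z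
      · subst hyz
        simp [not_mem_Cn_self, not_mem_Cn_self']
      have hu : 0 ≤ ω x * ω y * ω z * NN ω m (insert z (insert y (insert x I))) :=
        mul_nonneg (mul_nonneg (mul_nonneg (hω x).le (hω y).le) (hω z).le) (NN_nonneg ω hω _ _)
      have P := pull_point (x ∈ Cn I) (y ∈ Cn I) (z ∈ Cn I) (y ∈ Cn (insert x I))
        (z ∈ Cn (insert x I)) (x ∈ Cn (insert y I)) (z ∈ Cn (insert y I)) (x ∈ Cn (insert z I))
        (y ∈ Cn (insert z I)) (x ∈ Cn (insert z (insert y I))) (y ∈ Cn (insert z (insert x I)))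
        (z ∈ Cn (insert y (insert x I))) _ (f x) (f y) (f z) hu
        (fun h => mem_Cn_insert_of h (Ne.symm hxy)) (fun h => mem_Cn_insert_of h (Ne.symm hxz))
        (fun h => mem_Cn_insert_of h hxy) (fun h => mem_Cn_insert_of h (Ne.symm hyz))
        (fun h => mem_Cn_insert_of h hxz) (fun h => mem_Cn_insert_of h hyz)
        (fun h => mem_Cn_insert_of h hxz)
        (fun h => by rw [Finset.insert_comm]; exact mem_Cn_insert_of h hxy)
        (fun h => mem_Cn_insert_of h hyz)
        (fun h => by rw [Finset.insert_comm]; exact mem_Cn_insert_of h (Ne.symm hxy))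
        (fun h => mem_Cn_insert_of h (Ne.symm hyz))
        (fun h => by rw [Finset.insert_comm]; exact mem_Cn_insert_of h (Ne.symm hxz))
        (fun a b => mem_Cn_of_two hyz a b) (fun a b => mem_Cn_of_two hxz a b)
        (fun a b => mem_Cn_of_two hxy a b)
      refine P.trans_eq ?_
      have i1 : insert x (insert y I) = insert y (insert x I) := Finset.insert_comm _ _ _
      have i2 : insert z (insert x I) = insert x (insert z I) := Finset.insert_comm _ _ _
      have i3 : insert z (insert y I) = insert y (insert z I) := Finset.insert_comm _ _ _
      have j1 : insert z (insert y (insert x I)) = insert y (insert x (insert z I)) := by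
        rw [Finset.insert_comm, i2]
      have j2 : insert x (insert y (insert z I)) = insert y (insert x (insert z I)) := by
        rw [Finset.insert_comm]
      have w1 : ω x * ω z * ω y = ω x * ω y * ω z := by ring
      have w2 : ω y * ω x * ω z = ω x * ω y * ω z := by ring
      have w3 : ω y * ω z * ω x = ω x * ω y * ω z := by ring
      have w4 : ω z * ω x * ω y = ω x * ω y * ω z := by ring
      have w5 : ω z * ω y * ω x = ω x * ω y * ω z := by ring
      simp only [TT, i1, i2, i3, j1, j2, w1, w2, w3, w4, w5]
  have e1 : ∑ x ∈ Cn I, ω x * QQ ω m (insert x I) (TT I x f) f0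
      = ∑ x ∈ Cn I, ∑ y ∈ Cn (insert x I), ∑ z ∈ Cn (insert y (insert x I)),
          ω x * ω y * ω z * NN ω m (insert z (insert y (insert x I))) *
            (TT I x f y * TT (insert x I) y (TT I x f) z)
        + f0 * ∑ x ∈ Cn I, ω x * ell ω m (insert x I) (TT I x f) 0
        + f0 * ∑ x ∈ Cn I, ω x * ell ω m (insert x I) (TT I x f) f0 := by
    rw [Finset.mul_sum, Finset.mul_sum, ← Finset.sum_add_distrib, ← Finset.sum_add_distrib]
    refine Finset.sum_congr rfl fun x hx => ?_
    rw [QQ, mul_add]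
    congr 1
    · rw [ell, zero_mul, add_zero, Finset.mul_sum, Finset.mul_sum, Finset.mul_sum,
        ← Finset.sum_add_distrib]
      refine Finset.sum_congr rfl fun y hy => ?_
      have : ∑ z ∈ Cn (insert y (insert x I)),
          ω x * ω y * ω z * NN ω m (insert z (insert y (insert x I))) *
            (TT I x f y * TT (insert x I) y (TT I x f) z) = ω x * ω y * TT I x f y *
          ∑ z ∈ Cn (insert y (insert x I)), ω z * NN ω m (insert z (insert y (insert x I))) *
            TT (insert x I) y (TT I x f) z := by
        rw [Finset.mul_sum]
        exact Finset.sum_congr rfl fun z _ => by ring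
      rw [this, ell]; ring
    · ring
  have e2 : QQ ω (m + 1) I f f0
      = ∑ x ∈ Cn I, ∑ y ∈ Cn (insert x I), ∑ z ∈ Cn (insert y (insert x I)),
          ω x * ω y * ω z * NN ω m (insert z (insert y (insert x I))) * (f x * TT I x f y)
        + f0 * ell ω (m + 1) I f 0 + f0 * ell ω (m + 1) I f f0 := by
    rw [QQ]
    congr 1
    rw [ell, zero_mul, add_zero, Finset.mul_sum, ← Finset.sum_add_distrib]
    refine Finset.sum_congr rfl fun x hx => ?_
    have : ∑ y ∈ Cn (insert x I), ∑ z ∈ Cn (insert y (insert x I)),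
          ω x * ω y * ω z * NN ω m (insert z (insert y (insert x I))) * (f x * TT I x f y)
        = f x * ω x * ∑ y ∈ Cn (insert x I), ω y * NN ω (m + 1) (insert y (insert x I)) *
          TT I x f y := by
      rw [Finset.mul_sum]
      refine Finset.sum_congr rfl fun y _ => ?_
      rw [NN, Finset.mul_sum, Finset.sum_mul, Finset.mul_sum]
      exact Finset.sum_congr rfl fun z _ => by ring
    rw [this, ell]; ring
  rw [e1, e2, sum_row, sum_row]
  simp only [mul_sub, Finset.sum_sub_distrib] at hT
  linarith

/-! ### Hyperbolicity -/

lemma step (ω : X → ℝ) (hω : ∀ x, 0 < ω x) (m : ℕ) (I : Finset X)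
    (hI : I.card + m + 3 ≤ Fintype.card X)
    (H : ∀ x ∈ Cn I, Hyp ω m (insert x I)) (f : X → ℝ) (f0 : ℝ)
    (hf : ell ω (m + 2) I f f0 = 0) :
    QQ ω (m + 1) I f f0 ≤ 0 ∧ (QQ ω (m + 1) I f f0 = 0 →
      ∀ x ∈ Cn I, ell ω (m + 1) (insert x I) (TT I x f) f0 = 0) := by
  have hcard : ∀ x ∈ Cn I, (insert x I).card = I.card + 1 := fun x hx =>
    Finset.card_insert_of_notMem (mem_Cn.1 hx).1
  have LG := local_global (Cn I) (aa ω (m + 1) I) (fun x _ y _ => aa_symm ω _ I x y) ?_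
    (fun x => ω x * NN ω (m + 1) (insert x I)) (NN ω (m + 1) I) ?_ f f0 ?_
  · rw [← QQ_eq] at LG
    refine ⟨LG.1, fun h x hx => ?_⟩
    have h2 := LG.2 h x hx
    rw [← row_eq ω (m + 1) I hx] at h2
    exact (mul_eq_zero.1 h2).resolve_left (hω x).ne'
  · intro x hx y hy hxy
    rw [aa, if_neg hxy]
    refine mul_pos (mul_pos (hω x) (hω y)) (NN_pos ω hω _ _ ?_)
    rw [Finset.card_insert_of_notMem (mem_Cn.1 (mem_Cn_insert_of hy (Ne.symm hxy))).1, hcard x hx]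
    omega
  · intro g g0
    rw [← QQ_eq]
    refine (pull ω hω m I g g0).trans (Finset.sum_le_sum fun x hx => ?_)
    have hN : 0 < NN ω (m + 2) (insert x I) := NN_pos ω hω _ _ (by rw [hcard x hx]; omega)
    rw [← row_eq ω (m + 1) I hx, row_sum ω (m + 1) I hx]
    have h1 := (H x hx).prod hN (TT I x g) g0
    refine (mul_le_mul_of_nonneg_left h1 (hω x).le).trans_eq ?_
    have := hω x
    show _ = (ω x * ell ω (m + 1) (insert x I) (TT I x g) g0) ^ 2 / (ω x * NN ω (m + 2) (insert x I))
    field_simp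
  · rw [← Finset.sum_congr rfl (fun x hx => row_eq ω (m + 1) I hx f f0), sum_row, hf]

def Low (I : Finset X) : Prop := ∀ x ∈ I, ∀ y, y < x → y ∈ I

lemma Low.insert {I : Finset X} (h : Low I) {x : X} (hx : x ∈ Cn I) : Low (insert x I) := by
  intro z hz y hy
  rw [Finset.mem_insert] at hz ⊢
  rcases hz with rfl | hz
  · exact Or.inr ((mem_Cn.1 hx).2 y hy)
  · exact Or.inr (h z hz y hy)

lemma Ds_subset {I : Finset X} (h : Low I) {x : X} (hx : x ∈ Cn I) : Ds I x ⊆ covers x := by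
  intro y hy
  rw [Ds, Finset.mem_filter, mem_Cn_insert, mem_Cn] at hy
  obtain ⟨⟨h1, h2, h3⟩, h4⟩ := hy
  simp only [covers, Finset.mem_filter, Finset.mem_univ, true_and]
  have hxy : x < y := by
    by_contra hn
    refine h4 ⟨h2, fun z hz => ?_⟩
    rcases h3 z hz with rfl | h5
    · exact absurd hz hn
    · exact h5
  refine ⟨hxy, fun w hw1 hw2 => ?_⟩
  rcases h3 w hw2 with rfl | h5
  · exact lt_irrefl _ hw1
  · exact (mem_Cn.1 hx).1 (h w h5 x hw1)

lemma Ds_sum_le (ω : X → ℝ) (hω : ∀ x, 0 < ω x)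
    (hCM : ∀ x : X, (∑ y ∈ covers x, ω y) ≤ ω x) {I : Finset X} (h : Low I) {x : X}
    (hx : x ∈ Cn I) : ∑ y ∈ Ds I x, ω y ≤ ω x :=
  (Finset.sum_le_sum_of_subset_of_nonneg (Ds_subset h hx) (fun y _ _ => (hω y).le)).trans (hCM x)

lemma NN_one (ω : X → ℝ) (I : Finset X) : NN ω 1 I = ∑ x ∈ Cn I, ω x := by
  simp [NN]

lemma NN_one_insert (ω : X → ℝ) {I : Finset X} {x : X} (hx : x ∈ Cn I) :
    NN ω 1 (insert x I) = NN ω 1 I - (ω x - ∑ y ∈ Ds I x, ω y) := by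
  rw [NN_one, NN_one, sum_Cn_insert, ← Finset.add_sum_erase _ _ hx]; ring

lemma NN_two (ω : X → ℝ) (I : Finset X) :
    NN ω 2 I = NN ω 1 I ^ 2 - ∑ x ∈ Cn I, ω x * (ω x - ∑ y ∈ Ds I x, ω y) := by
  have : NN ω 2 I = ∑ x ∈ Cn I, ω x * NN ω 1 (insert x I) := by rw [NN]
  rw [this, Finset.sum_congr rfl (fun x hx => by rw [NN_one_insert ω hx])]
  simp only [mul_sub, Finset.sum_sub_distrib]
  rw [← Finset.sum_mul, ← NN_one, sq]

lemma base (ω : X → ℝ) (hω : ∀ x, 0 < ω x)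
    (hCM : ∀ x : X, (∑ y ∈ covers x, ω y) ≤ ω x) (I : Finset X) (h : Low I)
    (hI : I.card + 2 ≤ Fintype.card X) : Hyp ω 0 I := by
  intro f f0 hf
  have hN := NN_pos ω hω 2 I hI
  have hN1 := NN_pos ω hω 1 I (by omega)
  rw [NN_two] at hN
  set δ : X → ℝ := fun x => ω x - ∑ y ∈ Ds I x, ω y with hδ
  have hδ0 : ∀ x ∈ Cn I, 0 ≤ ω x * δ x := fun x hx =>
    mul_nonneg (hω x).le (sub_nonneg.2 (Ds_sum_le ω hω hCM h hx))
  set N := NN ω 1 I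
  set P := ∑ x ∈ Cn I, ω x * f x + f0 with hP
  have h1 : ell ω 1 I f f0 = N * P - ∑ x ∈ Cn I, ω x * δ x * f x := by
    rw [ell, Finset.sum_congr rfl (fun x hx => by rw [NN_one_insert ω hx]), hP, mul_add,
      Finset.mul_sum, add_sub_right_comm, ← Finset.sum_sub_distrib]
    congr 1
    · exact Finset.sum_congr rfl fun x _ => by simp only [hδ, N]; ring
    · simp only [N]; ring
  have h2 : QQ ω 0 I f f0 = P ^ 2 - ∑ x ∈ Cn I, ω x * δ x * f x ^ 2 := by
    have hr : ∀ x ∈ Cn I, ell ω 0 (insert x I) (TT I x f) f0 = P - δ x * f x := by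
      intro x hx
      rw [ell, sum_Cn_insert, hP, ← Finset.add_sum_erase _ _ hx]
      have a1 : ∑ y ∈ (Cn I).erase x, ω y * NN ω 0 (insert y (insert x I)) * TT I x f y
          = ∑ y ∈ (Cn I).erase x, ω y * f y := by
        refine Finset.sum_congr rfl fun y hy => ?_
        rw [TT, if_pos (Finset.mem_of_mem_erase hy), NN, mul_one]
      have a2 : ∑ y ∈ Ds I x, ω y * NN ω 0 (insert y (insert x I)) * TT I x f y
          = (∑ y ∈ Ds I x, ω y) * f x := by
        rw [Finset.sum_mul]
        refine Finset.sum_congr rfl fun y hy => ?_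
        rw [Ds, Finset.mem_filter] at hy
        rw [TT, if_neg hy.2, NN, mul_one]
      rw [a1, a2, NN]; simp only [hδ]; ring
    have hl : ell ω 0 I f f0 = P := by simp [ell, NN, hP]
    rw [QQ, hl, Finset.sum_congr rfl (fun x hx => by rw [hr x hx])]
    have : ∑ x ∈ Cn I, f x * (ω x * (P - δ x * f x))
        = (∑ x ∈ Cn I, ω x * f x) * P - ∑ x ∈ Cn I, ω x * δ x * f x ^ 2 := by
      rw [Finset.sum_mul, ← Finset.sum_sub_distrib]
      exact Finset.sum_congr rfl fun x _ => by ring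
    rw [this]
    have : ∑ x ∈ Cn I, ω x * f x = P - f0 := by rw [hP]; ring
    rw [this]; ring
  have hCS : (∑ x ∈ Cn I, ω x * δ x * f x) ^ 2
      ≤ (∑ x ∈ Cn I, ω x * δ x) * (∑ x ∈ Cn I, ω x * δ x * f x ^ 2) := by
    refine Finset.sum_sq_le_sum_mul_sum_of_sq_le_mul _ hδ0
      (fun x hx => mul_nonneg (hδ0 x hx) (sq_nonneg _)) (fun x _ => le_of_eq (by ring))
  have ha : 0 ≤ ∑ x ∈ Cn I, ω x * δ x := Finset.sum_nonneg hδ0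
  have hc : 0 ≤ ∑ x ∈ Cn I, ω x * δ x * f x ^ 2 :=
    Finset.sum_nonneg fun x hx => mul_nonneg (hδ0 x hx) (sq_nonneg _)
  rw [h1] at hf
  have hb : ∑ x ∈ Cn I, ω x * δ x * f x = N * P := by linarith
  rw [hb] at hCS
  rw [h2]
  by_contra hcon
  push Not at hcon
  generalize ∑ x ∈ Cn I, ω x * δ x * f x ^ 2 = c at *
  have hN' : ∑ x ∈ Cn I, ω x * δ x < N ^ 2 := by simpa using hN
  generalize ∑ x ∈ Cn I, ω x * δ x = a at *
  have : a * c < N ^ 2 * P ^ 2 := by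
    have hP2 : 0 < P ^ 2 := by linarith
    calc a * c ≤ a * P ^ 2 := by nlinarith
      _ < N ^ 2 * P ^ 2 := by nlinarith
  nlinarith

lemma hyp_all (ω : X → ℝ) (hω : ∀ x, 0 < ω x)
    (hCM : ∀ x : X, (∑ y ∈ covers x, ω y) ≤ ω x) (m : ℕ) : ∀ (I : Finset X), Low I →
    I.card + m + 2 ≤ Fintype.card X → Hyp ω m I := by
  induction m with
  | zero => intro I h hI; exact base ω hω hCM I h (by omega)
  | succ m ih =>
    intro I h hI f f0 hf
    refine (step ω hω m I (by omega) (fun x hx => ih _ (h.insert hx) ?_) f f0 hf).1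
    rw [Finset.card_insert_of_notMem (mem_Cn.1 hx).1]; omega

/-! ### Propagation of equality -/

def Eqc (ω : X → ℝ) (m : ℕ) (I : Finset X) (c : ℝ) : Prop :=
  ell ω (m + 1) I (fun _ => -c) 1 = 0 ∧ QQ ω m I (fun _ => -c) 1 = 0

lemma Eqc.step {ω : X → ℝ} (hω : ∀ x, 0 < ω x)
    (hCM : ∀ x : X, (∑ y ∈ covers x, ω y) ≤ ω x) {m : ℕ} {I : Finset X} {c : ℝ} (h : Low I)
    (hI : I.card + m + 3 ≤ Fintype.card X) (E : Eqc ω (m + 1) I c) {x : X} (hx : x ∈ Cn I) :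
    Eqc ω m (insert x I) c := by
  have hH : ∀ x ∈ Cn I, Hyp ω m (insert x I) := fun x hx =>
    hyp_all ω hω hCM m _ (h.insert hx) (by
      rw [Finset.card_insert_of_notMem (mem_Cn.1 hx).1]; omega)
  have h1 := (_root_.step ω hω m I hI hH _ 1 E.1).2 E.2
  have hp := pull ω hω m I (fun _ => -c) 1
  rw [E.2] at hp
  simp only [TT_const] at h1 hp
  have h2 : ∀ x ∈ Cn I, ω x * QQ ω m (insert x I) (fun _ => -c) 1 ≤ 0 := fun x hx =>
    mul_nonpos_of_nonneg_of_nonpos (hω x).le (hH x hx _ _ (h1 x hx))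
  have h3 := le_antisymm (Finset.sum_nonpos h2) hp
  rw [Finset.sum_eq_zero_iff_of_nonpos h2] at h3
  exact ⟨h1 x hx, (mul_eq_zero.1 (h3 x hx)).resolve_left (hω x).ne'⟩

lemma Eqc.base {ω : X → ℝ} (hω : ∀ x, 0 < ω x)
    (hCM : ∀ x : X, (∑ y ∈ covers x, ω y) ≤ ω x) {I : Finset X} {c : ℝ} (h : Low I)
    (hc : c ≠ 0) (E : Eqc ω 0 I c) {x : X} (hx : x ∈ Cn I) :
    ∑ y ∈ Cn I, ω y = 1 / c ∧ Ds I x = covers x ∧ ∑ y ∈ covers x, ω y = ω x := by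
  have e2 := NN_two ω I
  have h1' : NN ω 1 I = c * NN ω 2 I := by
    have := E.1
    rw [ell_const] at this
    norm_num at this
    linarith
  have h2' : c ^ 2 * NN ω 2 I - 2 * c * NN ω 1 I + 1 = 0 := by
    have := E.2
    rw [QQ_const] at this
    norm_num [NN.eq_1] at this
    linarith
  have h3 : c * NN ω 1 I = 1 := by
    have : c ^ 2 * NN ω 2 I = c * NN ω 1 I := by rw [h1']; ring
    linarith
  have h4 : NN ω 2 I = NN ω 1 I ^ 2 := by
    apply mul_left_cancel₀ (pow_ne_zero 2 hc)
    have : c ^ 2 * NN ω 1 I ^ 2 = (c * NN ω 1 I) ^ 2 := by ring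
    rw [this, h3]; nlinarith
  have h5 : ∑ x ∈ Cn I, ω x * (ω x - ∑ y ∈ Ds I x, ω y) = 0 := by linarith
  rw [Finset.sum_eq_zero_iff_of_nonneg (fun x hx => mul_nonneg (hω x).le
    (sub_nonneg.2 (Ds_sum_le ω hω hCM h hx)))] at h5
  have h6 := (mul_eq_zero.1 (h5 x hx)).resolve_left (hω x).ne'
  have h7 : Ds I x = covers x := by
    by_contra hne
    obtain ⟨y, hy1, hy2⟩ := Finset.exists_of_ssubset ((Ds_subset h hx).ssubset_of_ne hne)
    have := Finset.sum_lt_sum_of_subset (f := ω) (Ds_subset h hx) hy1 hy2 (hω y) (fun z _ _ => (hω z).le)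
    have := hCM x
    linarith
  refine ⟨?_, h7, ?_⟩
  · rw [← NN_one]; field_simp; linarith
  · rw [← h7]; linarith

/-! ### Words -/

lemma feasible_nil : FeasibleWord ([] : List X) := by
  refine ⟨List.nodup_nil, ?_⟩
  intro l₁ l₂ x h
  simp at h

lemma feasible_snoc (α : List X) (x : X) :
    FeasibleWord (α ++ [x]) ↔ FeasibleWord α ∧ x ∈ Cn α.toFinset := by
  constructor
  · rintro ⟨h1, h2⟩
    refine ⟨⟨(List.nodup_append.1 h1).1, ?_⟩, ?_⟩
    · intro l₁ l₂ z hz y hy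
      exact h2 l₁ (l₂ ++ [x]) z (by simp [hz]) y hy
    · rw [mem_Cn]
      refine ⟨?_, fun y hy => ?_⟩
      · intro hx
        rw [List.mem_toFinset] at hx
        have := List.nodup_append.1 h1
        exact this.2.2 x hx x (by simp) rfl
      · rw [List.mem_toFinset]
        exact h2 α [] x rfl y hy
  · rintro ⟨⟨h1, h2⟩, h3⟩
    rw [mem_Cn] at h3
    simp only [List.mem_toFinset] at h3
    refine ⟨?_, ?_⟩
    · rw [List.nodup_append]
      refine ⟨h1, by simp, ?_⟩
      intro a ha b hb hab
      simp only [List.mem_singleton] at hb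
      subst hb; subst hab
      exact h3.1 ha
    · intro l₁ l₂ z hz y hy
      rcases List.eq_nil_or_concat l₂ with rfl | ⟨l, w, rfl⟩
      · have := List.append_inj' hz rfl
        obtain ⟨r1, r2⟩ := this
        simp only [List.cons.injEq, and_true] at r2
        subst r1; subst r2
        exact h3.2 y hy
      · have hz' : α ++ [x] = (l₁ ++ z :: l) ++ [w] := by simpa using hz
        exact h2 l₁ l z (List.append_inj' hz' rfl).1 y hy

lemma feasible_low {α : List X} (h : FeasibleWord α) : Low α.toFinset := by
  intro x hx y hy
  rw [List.mem_toFinset] at hx ⊢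
  obtain ⟨l₁, l₂, e⟩ := List.append_of_mem hx
  have := h.2 l₁ l₂ x e y hy
  rw [e]; simp [this]

lemma toFinset_snoc (α : List X) (x : X) : (α ++ [x]).toFinset = insert x α.toFinset := by
  ext y; simp [or_comm]

lemma CntA_eq {α : List X} (h : FeasibleWord α) : CntA α = Cn α.toFinset := by
  ext x; simp [CntA, feasible_snoc, h]

lemma DesA_eq {α : List X} (h : FeasibleWord α) {x : X} (hx : x ∈ Cn α.toFinset) :
    DesA α x = Ds α.toFinset x := by
  ext y
  have e : α ++ [x, y] = (α ++ [x]) ++ [y] := by simp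
  simp only [DesA, Ds, Finset.mem_filter, Finset.mem_univ, true_and, e]
  rw [feasible_snoc, feasible_snoc, feasible_snoc, toFinset_snoc]
  simp [h, hx]

def FW (X : Type*) [Fintype X] [DecidableEq X] [PartialOrder X] (k : ℕ) : Finset (List X) :=
  (wordsLen X k).filter (fun α => FeasibleWord α)

lemma mem_FW {k : ℕ} {α : List X} : α ∈ FW X k ↔ α.length = k ∧ FeasibleWord α := by
  rw [FW, Finset.mem_filter, wordsLen, Finset.mem_image]
  refine and_congr_left fun _ => ?_
  constructor
  · rintro ⟨f, _, rfl⟩; simp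
  · rintro rfl; exact ⟨α.get, Finset.mem_univ _, List.ofFn_get α⟩

lemma sum_FW_succ (k : ℕ) (F : List X → ℝ) :
    ∑ α ∈ FW X (k + 1), F α = ∑ α ∈ FW X k, ∑ x ∈ Cn α.toFinset, F (α ++ [x]) := by
  rw [Finset.sum_sigma']
  symm
  refine Finset.sum_bij (fun p _ => p.1 ++ [p.2]) ?_ ?_ ?_ ?_
  · rintro ⟨α, x⟩ h
    rw [Finset.mem_sigma, mem_FW] at h
    rw [mem_FW, feasible_snoc]
    refine ⟨by simp [h.1.1], h.1.2, h.2⟩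
  · rintro ⟨α, x⟩ _ ⟨β, y⟩ _ h
    obtain ⟨r1, r2⟩ := List.append_inj' h rfl
    simp only [List.cons.injEq, and_true] at r1 r2
    subst r1; subst r2; rfl
  · intro β hβ
    rw [mem_FW] at hβ
    rcases List.eq_nil_or_concat β with rfl | ⟨l, w, rfl⟩
    · simp at hβ
    · rw [List.concat_eq_append, feasible_snoc] at hβ
      refine ⟨⟨l, w⟩, ?_, by simp⟩
      rw [Finset.mem_sigma, mem_FW]
      refine ⟨⟨?_, hβ.2.1⟩, hβ.2.2⟩
      simpa using hβ.1
  · rintro ⟨α, x⟩ _; rfl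

lemma Lw_eq (ω : X → ℝ) (m : ℕ) : ∀ j : ℕ,
    Lw ω (j + m) = ∑ α ∈ FW X j, (α.map ω).prod * NN ω m α.toFinset := by
  induction m with
  | zero => intro j; simp [Lw, FW, NN]
  | succ m ih =>
    intro j
    have := ih (j + 1)
    rw [show j + (m + 1) = j + 1 + m by omega, this, sum_FW_succ]
    refine Finset.sum_congr rfl fun α _ => ?_
    rw [NN, Finset.mul_sum]
    refine Finset.sum_congr rfl fun x _ => ?_
    rw [toFinset_snoc]; simp; ring

lemma FW_zero : FW X 0 = {[]} := by
  ext α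
  rw [mem_FW, Finset.mem_singleton, List.length_eq_zero_iff]
  constructor
  · exact fun h => h.1
  · rintro rfl; exact ⟨rfl, feasible_nil⟩

lemma Lw_eq_NN (ω : X → ℝ) (m : ℕ) : Lw ω m = NN ω m ∅ := by
  have := Lw_eq ω m 0
  rw [FW_zero] at this
  simpa using this

lemma Eqc.words {ω : X → ℝ} (hω : ∀ x, 0 < ω x)
    (hCM : ∀ x : X, (∑ y ∈ covers x, ω y) ≤ ω x) {m : ℕ} {c : ℝ}
    (hm : m + 2 ≤ Fintype.card X) (E : Eqc ω m ∅ c) (j : ℕ) :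
    ∀ i, i + j = m → ∀ α : List X, FeasibleWord α → α.length = j → Eqc ω i α.toFinset c := by
  induction j with
  | zero =>
    intro i hi α _ hl
    rw [List.length_eq_zero_iff] at hl
    subst hl
    have : i = m := by omega
    subst this
    simpa using E
  | succ j ih =>
    intro i hi α hα hl
    rcases List.eq_nil_or_concat α with rfl | ⟨l, w, rfl⟩
    · simp at hl
    · rw [List.concat_eq_append, feasible_snoc] at hα
      rw [List.concat_eq_append, toFinset_snoc]
      have hl' : l.length = j := by simpa using hl
      have := ih (i + 1) (by omega) l hα.1 hl'
      refine Eqc.step hω hCM (feasible_low hα.1) ?_ this hα.2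
      rw [List.toFinset_card_of_nodup hα.1.1, hl']; omega

/-- **Equality conditions for poset antimatroids.**  Equality
`L_ω(k)² = L_ω(k-1)·L_ω(k+1)` holds if and only if there is `s > 0` such that for every
feasible word `α` of length `k-1` and every `x ∈ Cnt(α)`:
(AE1) `Σ_{x' ∈ Cnt(α)} ω(x') = s`; (AE2) `Des_α(x) = Cov(x)`;
(AE3) `Σ_{y ∈ Cov(x)} ω(y) = ω(x)`. -/
theorem poset_antimatroid_equality
    (ω : X → ℝ) (hω : ∀ x, 0 < ω x)
    (hCM : ∀ x : X, (∑ y ∈ covers x, ω y) ≤ ω x)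
    (k : ℕ) (hk1 : 1 ≤ k) (hk2 : k < Fintype.card X) :
    (Lw ω k) ^ 2 = Lw ω (k - 1) * Lw ω (k + 1) ↔
      ∃ s : ℝ, 0 < s ∧ ∀ α : List X, FeasibleWord α → α.length = k - 1 →
        ∀ x ∈ CntA α,
          (∑ x' ∈ CntA α, ω x') = s ∧
          DesA α x = covers x ∧
          (∑ y ∈ covers x, ω y) = ω x := by
  obtain ⟨m, rfl⟩ : ∃ m, k = m + 1 := ⟨k - 1, by omega⟩
  simp only [Nat.add_sub_cancel]
  constructor
  · intro h
    rw [Lw_eq_NN, Lw_eq_NN, Lw_eq_NN] at h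
    have p1 := NN_pos ω hω (m + 1) (∅ : Finset X) (by simp; omega)
    have p2 := NN_pos ω hω (m + 2) (∅ : Finset X) (by simp; omega)
    have h' : NN ω (m + 1) (∅ : Finset X) ^ 2 = NN ω m ∅ * NN ω (m + 2) ∅ := h
    set c := NN ω (m + 1) (∅ : Finset X) / NN ω (m + 2) ∅ with hc
    have hc0 : 0 < c := div_pos p1 p2
    have hcN : c * NN ω (m + 2) (∅ : Finset X) = NN ω (m + 1) ∅ := by rw [hc]; field_simp
    have E : Eqc ω m (∅ : Finset X) c := by
      refine ⟨?_, ?_⟩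
      · rw [ell_const]
        show -c * NN ω (m + 2) (∅ : Finset X) + _ = _
        linarith
      · rw [QQ_const]
        apply mul_right_cancel₀ p2.ne'
        rw [zero_mul]
        linear_combination (c * NN ω (m + 2) (∅ : Finset X) - NN ω (m + 1) ∅) * hcN - h'
    refine ⟨1 / c, by positivity, fun α hα hl x hx => ?_⟩
    rw [CntA_eq hα] at hx ⊢
    rw [DesA_eq hα hx]
    exact Eqc.base hω hCM (feasible_low hα) hc0.ne'
      (Eqc.words hω hCM (by omega) E m 0 (by omega) α hα hl) hx
  · rintro ⟨s, hs, H⟩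
    have h0 := Lw_eq ω 0 m
    have h1 := Lw_eq ω 1 m
    have h2 := Lw_eq ω 2 m
    have key : ∀ α ∈ FW X m, NN ω 1 α.toFinset = s ∧ NN ω 2 α.toFinset = s ^ 2 := by
      intro α hα
      rw [mem_FW] at hα
      have H' := H α hα.2 hα.1
      rw [CntA_eq hα.2] at H'
      obtain ⟨x, hx⟩ : (Cn α.toFinset).Nonempty := Cn_nonempty (by
        rw [List.toFinset_card_of_nodup hα.2.1, hα.1]; omega)
      have e1 : NN ω 1 α.toFinset = s := by rw [NN_one]; exact (H' x hx).1
      refine ⟨e1, ?_⟩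
      rw [NN_two, e1, Finset.sum_eq_zero, sub_zero]
      intro y hy
      obtain ⟨_, a2, a3⟩ := H' y hy
      rw [DesA_eq hα.2 hy] at a2
      rw [a2, a3, sub_self, mul_zero]
    rw [Finset.sum_congr rfl (fun α hα => by rw [(key α hα).1]), ← Finset.sum_mul] at h1
    rw [Finset.sum_congr rfl (fun α hα => by rw [(key α hα).2]), ← Finset.sum_mul] at h2
    simp only [NN, mul_one, add_zero] at h0
    show Lw ω (m + 1) ^ 2 = Lw ω m * Lw ω (m + 2)
    rw [h0, h1, h2]; ring
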